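/- Let a be a semi-integer (2a ∈ ℤ, a ≠ 0), let x be an (n−2)-dimensional central configuration for U_a with positive masses m_1, …, m_n normalized so that λ/M = 1, with mutual distances r = (r_{ij}), and let z_1, …, z_n be associated numbers (all real or all purely imaginary, at least two nonzero) satisfying r_{ij}^{2a} − 1 − z_i z_j = 0 for all i < j, ∑_j m_j z_j = 0 and Δ_0 + ∑_j m_j z_j r_{jl}² = 0 for all l. Then there exists an index i ∈ {1, …, n} such that ∑_{j≠i} r_{ij}^{−2a+1} (∂F/∂R_{ij})(r) z_j ≠ 0; that is, the quantities Ψ_i^a evaluated at the point associated to x do not all vanish simultaneously. -/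

import Mathlib

/-- The dimension of a configuration: the dimension of the smallest affine
subspace containing the points. -/
noncomputable def confDim {d n : ℕ} (x : Fin n → EuclideanSpace ℝ (Fin d)) : ℕ :=
  Module.finrank ℝ (affineSpan ℝ (Set.range x)).direction

/-- `x` is a central configuration for the potential `U_a` (with `c2 = 2a ∈ ℤ`),
masses `m`, and multiplier `lam`. -/
def IsCentralConfig {d n : ℕ} (c2 : ℤ) (m : Fin n → ℝ) (lam : ℝ)
    (x : Fin n → EuclideanSpace ℝ (Fin d)) : Prop :=
  ∀ j : Fin n,
    (∑ i ∈ Finset.univ \ {j}, (m i * dist (x i) (x j) ^ c2) • (x i - x j))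
      + lam • (x j - (∑ i, m i)⁻¹ • ∑ i, m i • x i) = 0

/-- Index type for the mutual-distance variables `R_{ij}`, `1 ≤ i < j ≤ n`. -/
abbrev PairIdx (n : ℕ) := {p : Fin n × Fin n // p.1 < p.2}

/-- The polynomial `R_{ij}` (for an unordered pair `{i,j}`; junk value `0` if `i = j`). -/
noncomputable def Rvar {n : ℕ} (i j : Fin n) : MvPolynomial (PairIdx n) ℂ :=
  if h : i < j then MvPolynomial.X ⟨(i, j), h⟩
  else if h' : j < i then MvPolynomial.X ⟨(j, i), h'⟩ else 0

/-- The polynomial Cayley–Menger matrix `A(R)` over `ℂ[R_{12}, …, R_{(n−1)n}]`. -/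
noncomputable def cmPolyMatrix (n : ℕ) :
    Matrix (Fin (n + 1)) (Fin (n + 1)) (MvPolynomial (PairIdx n) ℂ) :=
  Matrix.of fun i j =>
    Fin.cases (Fin.cases 0 (fun _ => 1) j)
      (fun i' => Fin.cases 1 (fun j' => Rvar i' j' ^ 2) j) i

/-- The Cayley–Menger determinant polynomial `F = det A(R)`. -/
noncomputable def Fpoly (n : ℕ) : MvPolynomial (PairIdx n) ℂ := (cmPolyMatrix n).det

/-- `∂F/∂R_{ij}` for an unordered pair `{i,j}` (junk value `0` if `i = j`). -/
noncomputable def dF {n : ℕ} (i j : Fin n) : MvPolynomial (PairIdx n) ℂ :=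
  if h : i < j then MvPolynomial.pderiv (⟨(i, j), h⟩ : PairIdx n) (Fpoly n)
  else if h' : j < i then MvPolynomial.pderiv (⟨(j, i), h'⟩ : PairIdx n) (Fpoly n) else 0

/-!
Let `A` be the Cayley–Menger matrix of `x`. By Jacobi's formula `∂F/∂R_ij` at `r` equals
`4 r_ij * adj(A)_ij`. A vector `(t, w)` in the kernel of `A` has `∑ j, w j = 0` and
`|∑ j, w j • x j|² = -½ ∑ i j, w i * w j * r_ij² = 0`, so `w` is an affine relation between the
points; when these span a space of dimension `n - 2`, the affine relations form a line. Hence `A`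
is symmetric of corank one, and `adj(A) = c • v vᵀ` with `c ≠ 0` and `v = (t, w)` spanning the
kernel. Up to a common complex factor `ε`, the kernel vector `w j = m j * z j` is real, and with
`z j = ε * y j` the sum `∑ j, r_ij ^ (1 - 2a) * ∂F/∂R_ij * z j` becomes a nonzero multiple of
`y i * ∑ j, r_ij ^ (2 - 2a) * m j * y j²`, where the last sum is positive as soon as some `y j`
with `j ≠ i` is nonzero.
-/

/-! ### Jacobi's formula for derivations -/

section Derivation

variable {R A ι : Type*} [CommRing R] [CommRing A] [Algebra R A] [DecidableEq ι]

theorem derivation_prod {M : Type*} [AddCommGroup M] [Module A M] [Module R M]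
    (D : Derivation R A M) (s : Finset ι) (f : ι → A) :
    D (∏ i ∈ s, f i) = ∑ i ∈ s, (∏ j ∈ s.erase i, f j) • D (f i) := by
  induction s using Finset.induction_on with
  | empty => simp
  | insert a s ha ih =>
    have herase : ∀ i ∈ s, ∏ j ∈ (insert a s).erase i, f j = f a * ∏ j ∈ s.erase i, f j := by
      intro i hi
      have hne : a ≠ i := fun h => ha (h ▸ hi)
      rw [Finset.erase_insert_of_ne hne, Finset.prod_insert (by simp [ha])]
    rw [Finset.prod_insert ha, D.leibniz, ih, Finset.sum_insert ha, Finset.erase_insert ha,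
      Finset.smul_sum, add_comm]
    congr 1
    exact Finset.sum_congr rfl fun i hi => by rw [herase i hi, mul_smul]

theorem derivation_det [Fintype ι] (D : Derivation R A A) (M : Matrix ι ι A) :
    D M.det = (M.adjugate * M.map D).trace := by
  have hterm (σ : Equiv.Perm ι) (i : ι) :
      (∏ j ∈ Finset.univ.erase i, M (σ j) j) * D (M (σ i) i)
        = ∏ j, M.updateCol i (fun a => D (M a i)) (σ j) j := by
    rw [← Finset.mul_prod_erase _ _ (Finset.mem_univ i), Matrix.updateCol_self, mul_comm]
    congr 1
    exact Finset.prod_congr rfl fun j hj => (Matrix.updateCol_ne (Finset.ne_of_mem_erase hj)).symm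
  calc D M.det
      = ∑ i, (M.updateCol i fun a => D (M a i)).det := by
        simp only [Matrix.det_apply', map_sum]
        rw [Finset.sum_comm]
        refine Finset.sum_congr rfl fun σ _ => ?_
        rw [D.leibniz, D.map_intCast, smul_zero, add_zero, derivation_prod, smul_eq_mul,
          Finset.mul_sum]
        simp only [smul_eq_mul, hterm]
    _ = (M.adjugate * M.map D).trace := by
        simp only [← Matrix.cramer_apply, Matrix.cramer_eq_adjugate_mulVec]
        rfl

end Derivation

/-! ### The adjugate of a matrix of corank one -/

section Adjugate

variable {K ι : Type*} [Field K] [Fintype ι] [DecidableEq ι] {A : Matrix ι ι K} {v w : ι → K}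

open Matrix

theorem adjugate_apply_ne_zero (hv : LinearMap.ker A.mulVecLin ≤ Submodule.span K {v})
    (hw : w ᵥ* A = 0) {i j : ι} (hi : v i ≠ 0) (hj : w j ≠ 0) : A.adjugate i j ≠ 0 := by
  rw [adjugate_apply]
  intro hdet
  obtain ⟨u, hu0, hu⟩ := exists_mulVec_eq_zero_iff.mpr hdet
  have hui : u i = 0 := by simpa [mulVec] using congrFun hu j
  have hAu_ne (a : ι) (ha : a ≠ j) : (A *ᵥ u) a = 0 := by
    simpa [mulVec, updateRow_ne ha] using congrFun hu a
  -- The left kernel vector `w` recovers the one equation that the replaced row lost.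
  have hAu_self : w j * (A *ᵥ u) j = 0 := by
    have hdot : w ⬝ᵥ (A *ᵥ u) = 0 := by rw [dotProduct_mulVec, hw, zero_dotProduct]
    rwa [dotProduct, Finset.sum_eq_single j (fun a _ ha => by rw [hAu_ne a ha, mul_zero])
      (by simp)] at hdot
  have hAu : A *ᵥ u = 0 := by
    funext a
    rcases eq_or_ne a j with rfl | ha
    · exact (mul_eq_zero.mp hAu_self).resolve_left hj
    · exact hAu_ne a ha
  obtain ⟨c, rfl⟩ := Submodule.mem_span_singleton.mp (hv (LinearMap.mem_ker.mpr hAu))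
  have hc : c = 0 := by simpa [hi] using hui
  exact hu0 (by rw [hc, zero_smul])

theorem exists_adjugate_eq_smul_vecMulVec (hv0 : v ≠ 0) (hw0 : w ≠ 0)
    (hv : LinearMap.ker A.mulVecLin = Submodule.span K {v})
    (hw : LinearMap.ker A.vecMulLinear = Submodule.span K {w}) :
    ∃ c : K, c ≠ 0 ∧ A.adjugate = c • vecMulVec v w := by
  have hAv : A *ᵥ v = 0 :=
    LinearMap.mem_ker.mp (hv ▸ Submodule.mem_span_singleton_self v)
  have hwA : w ᵥ* A = 0 :=
    LinearMap.mem_ker.mp (hw ▸ Submodule.mem_span_singleton_self w)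
  have hdet : A.det = 0 := exists_mulVec_eq_zero_iff.mp ⟨v, hv0, hAv⟩
  have hcol (j : ι) : A.adjugate.col j ∈ LinearMap.ker A.mulVecLin := by
    have hmul : A * A.adjugate = 0 := by rw [mul_adjugate, hdet, zero_smul]
    exact LinearMap.mem_ker.mpr (funext fun a => congrFun₂ hmul a j)
  have hrow (i : ι) : A.adjugate.row i ∈ LinearMap.ker A.vecMulLinear := by
    have hmul : A.adjugate * A = 0 := by rw [adjugate_mul, hdet, zero_smul]
    exact LinearMap.mem_ker.mpr (funext fun a => congrFun₂ hmul i a)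
  simp only [hv, hw, Submodule.mem_span_singleton] at hcol hrow
  obtain ⟨i, hi⟩ := Function.ne_iff.mp hv0
  obtain ⟨j, hj⟩ := Function.ne_iff.mp hw0
  obtain ⟨d, hd⟩ := hrow i
  have hadj (a b : ι) : A.adjugate a b = (d / v i) * (v a * w b) := by
    obtain ⟨e, he⟩ := hcol b
    have hib : d * w b = e * v i := (congrFun hd b).trans (congrFun he i).symm
    have hab : e * v a = A.adjugate a b := congrFun he a
    rw [← hab, div_mul_eq_mul_div, eq_div_iff hi]
    linear_combination (-v a) * hib
  refine ⟨d / v i, fun h => adjugate_apply_ne_zero hv.le hwA hi hj ?_, Matrix.ext hadj⟩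
  rw [hadj, h, zero_mul]

end Adjugate

/-! ### Affine relations -/

section AffineRelations

variable {k V P ι : Type*} [Field k] [AddCommGroup V] [Module k V] [AddTorsor V P] [Fintype ι]

variable (k) in
/-- The space of affine relations of a family of points `p`: the weights `w` of sum zero with
`∑ i, w i • p i = 0`, where the latter sum makes sense in an affine space because the weights
sum to zero. -/
noncomputable def affineRelations (p : ι → P) : Submodule k (ι → k) :=
  LinearMap.ker (Fintype.linearCombination k fun _ : ι => (1 : k)) ⊓
    LinearMap.ker (Finset.univ.weightedVSub p : (ι → k) →ₗ[k] V)

theorem mem_affineRelations {p : ι → P} {w : ι → k} :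
    w ∈ affineRelations k p ↔ ∑ i, w i = 0 ∧ Finset.univ.weightedVSub p w = (0 : V) := by
  simp [affineRelations, Fintype.linearCombination_apply]

theorem mem_vectorSpan_range_iff_exists_weightedVSub_univ {p : ι → P} {v : V} :
    v ∈ vectorSpan k (Set.range p) ↔
      ∃ w : ι → k, ∑ i, w i = 0 ∧ Finset.univ.weightedVSub p w = v := by
  rw [mem_vectorSpan_iff_eq_weightedVSub]
  constructor
  · rintro ⟨s, w, hw, rfl⟩
    refine ⟨Set.indicator s w, ?_, ?_⟩
    · rwa [Finset.sum_indicator_subset w s.subset_univ]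
    · exact (Finset.weightedVSub_indicator_subset w p s.subset_univ).symm
  · rintro ⟨w, hw, rfl⟩
    exact ⟨Finset.univ, w, hw, rfl⟩

theorem finrank_affineRelations_add_finrank_vectorSpan [Nonempty ι] (p : ι → P) :
    Module.finrank k (affineRelations k p) + Module.finrank k (vectorSpan k (Set.range p)) + 1
      = Fintype.card ι := by
  classical
  set σ : Module.Dual k (ι → k) := Fintype.linearCombination k fun _ : ι => (1 : k) with hσ
  set φ : LinearMap.ker σ →ₗ[k] V := (Finset.univ.weightedVSub p).domRestrict (LinearMap.ker σ)
    with hφ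
  have hrange : LinearMap.range φ = vectorSpan k (Set.range p) := by
    ext v
    simp [hφ, hσ, mem_vectorSpan_range_iff_exists_weightedVSub_univ,
      Fintype.linearCombination_apply]
  have hker : Module.finrank k (LinearMap.ker φ) = Module.finrank k (affineRelations k p) := by
    rw [← Submodule.finrank_map_subtype_eq, LinearMap.ker_domRestrict,
      Submodule.map_comap_subtype]
    rfl
  have hσ0 : σ ≠ 0 := by
    intro h
    simpa [hσ] using LinearMap.congr_fun h (Pi.single (Classical.arbitrary ι) 1)
  rw [← hker, ← hrange, add_comm (Module.finrank k (LinearMap.ker φ)),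
    LinearMap.finrank_range_add_finrank_ker, Module.Dual.finrank_ker_add_one_of_ne_zero hσ0,
    Module.finrank_fintype_fun_eq_card]

end AffineRelations

/-! ### The Cayley–Menger matrix of a point configuration -/

section CayleyMenger

open Matrix

variable {n : ℕ}

section PseudoMetricSpace

variable {P : Type*} [PseudoMetricSpace P]

/-- The Cayley–Menger matrix of the points `x 0, …, x (n - 1)`: the matrix of squared distances,
bordered by a row and a column of ones with index `0`. -/
noncomputable def cayleyMengerMatrix (x : Fin n → P) :
    Matrix (Fin (n + 1)) (Fin (n + 1)) ℝ :=
  of fun i j => Fin.cases (Fin.cases 0 (fun _ => 1) j)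
    (fun i' => Fin.cases 1 (fun j' => dist (x i') (x j') ^ 2) j) i

theorem isSymm_cayleyMengerMatrix (x : Fin n → P) : (cayleyMengerMatrix x).IsSymm := by
  ext i j
  cases i using Fin.cases <;> cases j using Fin.cases <;> simp [cayleyMengerMatrix, dist_comm]

theorem cayleyMengerMatrix_mulVec_cons_eq_zero_iff {x : Fin n → P} {t : ℝ} {w : Fin n → ℝ} :
    cayleyMengerMatrix x *ᵥ (Fin.cons t w : Fin (n + 1) → ℝ) = 0 ↔
      ∑ j, w j = 0 ∧ ∀ l, t + ∑ j, w j * dist (x j) (x l) ^ 2 = 0 := by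
  simp [funext_iff, Fin.forall_fin_succ, mulVec, dotProduct, Fin.sum_univ_succ (n := n),
    cayleyMengerMatrix, dist_comm, mul_comm]

end PseudoMetricSpace

variable {V P : Type*} [NormedAddCommGroup V] [InnerProductSpace ℝ V] [MetricSpace P]
  [NormedAddTorsor V P]

theorem mem_affineRelations_of_add_sum_mul_dist_sq_eq_zero {ι : Type*} [Fintype ι] {x : ι → P}
    {t : ℝ} {w : ι → ℝ} (hw : ∑ j, w j = 0)
    (ht : ∀ l, t + ∑ j, w j * dist (x j) (x l) ^ 2 = 0) : w ∈ affineRelations ℝ x := by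
  refine mem_affineRelations.mpr ⟨hw, inner_self_eq_zero (𝕜 := ℝ).mp ?_⟩
  have hinner : ∑ i, ∑ j, w i * w j * (dist (x i) (x j) * dist (x i) (x j)) = 0 :=
    calc ∑ i, ∑ j, w i * w j * (dist (x i) (x j) * dist (x i) (x j))
        = ∑ l, w l * ∑ j, w j * dist (x j) (x l) ^ 2 := by
          simp only [Finset.mul_sum]
          refine Finset.sum_congr rfl fun l _ => Finset.sum_congr rfl fun j _ => ?_
          rw [dist_comm (x l)]
          ring
      _ = ∑ l, w l * (-t) := by simp only [fun l => eq_neg_of_add_eq_zero_right (ht l)]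
      _ = 0 := by rw [← Finset.sum_mul, hw, zero_mul]
  rw [EuclideanGeometry.inner_weightedVSub x hw x hw, hinner, neg_zero, zero_div]

theorem finrank_ker_cayleyMengerMatrix_add_finrank_vectorSpan_le [NeZero n] (x : Fin n → P) :
    Module.finrank ℝ (LinearMap.ker (cayleyMengerMatrix x).mulVecLin)
      + Module.finrank ℝ (vectorSpan ℝ (Set.range x)) + 1 ≤ n := by
  have hker (u : Fin (n + 1) → ℝ) (hu : u ∈ LinearMap.ker (cayleyMengerMatrix x).mulVecLin) :
      ∑ j, Fin.tail u j = 0 ∧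
        ∀ l, u 0 + ∑ j, Fin.tail u j * dist (x j) (x l) ^ 2 = 0 := by
    rwa [LinearMap.mem_ker, mulVecLin_apply, ← Fin.cons_self_tail u,
      cayleyMengerMatrix_mulVec_cons_eq_zero_iff] at hu
  let tail : LinearMap.ker (cayleyMengerMatrix x).mulVecLin →ₗ[ℝ] affineRelations ℝ x :=
    (LinearMap.funLeft ℝ ℝ Fin.succ).restrict fun u hu =>
      mem_affineRelations_of_add_sum_mul_dist_sq_eq_zero (hker u hu).1 (hker u hu).2
  have htail : Function.Injective tail := by
    rw [injective_iff_map_eq_zero]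
    rintro ⟨u, hu⟩ hu0
    have hsucc (j : Fin n) : u j.succ = 0 := congrFun (congrArg Subtype.val hu0) j
    have hzero : u 0 = 0 := by simpa [Fin.tail, hsucc] using (hker u hu).2 0
    exact Subtype.ext (funext (Fin.cases hzero hsucc))
  have hle := LinearMap.finrank_le_finrank_of_injective htail
  have hrel := finrank_affineRelations_add_finrank_vectorSpan (k := ℝ) x
  rw [Fintype.card_fin] at hrel
  omega

theorem exists_adjugate_cayleyMengerMatrix_eq {x : Fin n → P}
    (hx : Module.finrank ℝ (vectorSpan ℝ (Set.range x)) + 2 = n) {v : Fin (n + 1) → ℝ}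
    (hv0 : v ≠ 0) (hv : cayleyMengerMatrix x *ᵥ v = 0) :
    ∃ c : ℝ, c ≠ 0 ∧ (cayleyMengerMatrix x).adjugate = c • vecMulVec v v := by
  have : NeZero n := ⟨by omega⟩
  have hmem : v ∈ LinearMap.ker (cayleyMengerMatrix x).mulVecLin := LinearMap.mem_ker.mpr hv
  have hfinrank : Module.finrank ℝ (LinearMap.ker (cayleyMengerMatrix x).mulVecLin) = 1 := by
    have hle := finrank_ker_cayleyMengerMatrix_add_finrank_vectorSpan_le x
    have hpos := Submodule.one_le_finrank_iff.mpr (Submodule.ne_bot_iff _ |>.mpr ⟨v, hmem, hv0⟩)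
    omega
  have hker := eq_span_singleton_of_mem_of_finrank_eq_one hfinrank hmem hv0
  refine exists_adjugate_eq_smul_vecMulVec hv0 hv0 hker ?_
  rw [← hker, ← mulVecLin_transpose, (isSymm_cayleyMengerMatrix x).eq]

end CayleyMenger

/-! ### Partial derivatives of the Cayley–Menger determinant -/

section PartialDerivatives

variable {n : ℕ}

open Matrix MvPolynomial

theorem Rvar_comm (i j : Fin n) : Rvar i j = Rvar j i := by
  unfold Rvar
  rcases lt_trichotomy i j with h | rfl | h
  · simp [h, h.not_gt]
  · rfl
  · simp [h, h.not_gt]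

theorem isSymm_cmPolyMatrix (n : ℕ) : (cmPolyMatrix n).IsSymm := by
  ext i j
  cases i using Fin.cases <;> cases j using Fin.cases <;> simp [cmPolyMatrix, Rvar_comm]

theorem pderiv_Rvar {i j : Fin n} (h : i < j) (k l : Fin n) :
    pderiv (⟨(i, j), h⟩ : PairIdx n) (Rvar k l)
      = if (i = k ∧ j = l) ∨ (j = k ∧ i = l) then 1 else 0 := by
  unfold Rvar
  split_ifs <;> simp [pderiv_X, Pi.single_apply, Prod.ext_iff] <;> grind

theorem map_pderiv_cmPolyMatrix {i j : Fin n} (h : i < j) :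
    (cmPolyMatrix n).map (pderiv (⟨(i, j), h⟩ : PairIdx n))
      = single i.succ j.succ (2 * Rvar i j) + single j.succ i.succ (2 * Rvar i j) := by
  ext1 k l
  cases k using Fin.cases with
  | zero => cases l using Fin.cases <;> simp [cmPolyMatrix]
  | succ k =>
    cases l using Fin.cases with
    | zero => simp [cmPolyMatrix]
    | succ l =>
      have hsq : cmPolyMatrix n k.succ l.succ = Rvar k l ^ 2 := by simp [cmPolyMatrix]
      simp only [map_apply, hsq, Derivation.leibniz_pow, pderiv_Rvar, Matrix.add_apply,
        single_apply, Fin.succ_inj]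
      by_cases hij : i = k ∧ j = l
      · obtain ⟨rfl, rfl⟩ := hij
        simp [h.ne']
      · by_cases hji : j = k ∧ i = l
        · obtain ⟨rfl, rfl⟩ := hji
          simp [h.ne, Rvar_comm]
        · simp [hij, hji]

theorem pderiv_Fpoly {i j : Fin n} (h : i < j) :
    pderiv (⟨(i, j), h⟩ : PairIdx n) (Fpoly n)
      = 4 * Rvar i j * (cmPolyMatrix n).adjugate i.succ j.succ := by
  rw [Fpoly, derivation_det, map_pderiv_cmPolyMatrix, mul_add, trace_add, trace_mul_single,
    trace_mul_single, (isSymm_cmPolyMatrix n).adjugate.apply i.succ j.succ]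
  simp only [MulOpposite.smul_eq_mul_unop, MulOpposite.unop_op]
  ring

theorem dF_eq_mul_adjugate (i j : Fin n) :
    dF i j = 4 * Rvar i j * (cmPolyMatrix n).adjugate i.succ j.succ := by
  unfold dF
  rcases lt_trichotomy i j with h | rfl | h
  · rw [dif_pos h, pderiv_Fpoly]
  · simp [Rvar]
  · rw [dif_neg h.not_gt, dif_pos h, pderiv_Fpoly, Rvar_comm,
      (isSymm_cmPolyMatrix n).adjugate.apply]

variable {P : Type*} [PseudoMetricSpace P]

theorem eval_Rvar (x : Fin n → P) (i j : Fin n) :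
    eval (fun p : PairIdx n => ((dist (x p.1.1) (x p.1.2) : ℝ) : ℂ)) (Rvar i j)
      = dist (x i) (x j) := by
  unfold Rvar
  rcases lt_trichotomy i j with h | rfl | h
  · simp [h]
  · simp
  · simp [h, h.not_gt, dist_comm]

theorem map_eval_cmPolyMatrix (x : Fin n → P) :
    (cmPolyMatrix n).map (eval fun p : PairIdx n => ((dist (x p.1.1) (x p.1.2) : ℝ) : ℂ))
      = (cayleyMengerMatrix x).map Complex.ofRealHom := by
  ext i j
  cases i using Fin.cases <;> cases j using Fin.cases <;>
    simp [cmPolyMatrix, cayleyMengerMatrix, eval_Rvar]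

theorem eval_dF (x : Fin n → P) (i j : Fin n) :
    eval (fun p : PairIdx n => ((dist (x p.1.1) (x p.1.2) : ℝ) : ℂ)) (dF i j)
      = ((4 * dist (x i) (x j) * (cayleyMengerMatrix x).adjugate i.succ j.succ : ℝ) : ℂ) := by
  have hadj := congrFun₂ (congrArg adjugate (map_eval_cmPolyMatrix x)) i.succ j.succ
  simp only [← RingHom.mapMatrix_apply, ← RingHom.map_adjugate] at hadj
  rw [dF_eq_mul_adjugate, map_mul, map_mul, eval_Rvar, map_ofNat]
  push_cast
  congr 1

theorem exists_eval_dF_eq {V P : Type*} [NormedAddCommGroup V] [InnerProductSpace ℝ V]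
    [MetricSpace P] [NormedAddTorsor V P] {x : Fin n → P}
    (hx : Module.finrank ℝ (vectorSpan ℝ (Set.range x)) + 2 = n) {t : ℝ} {w : Fin n → ℝ}
    (hw0 : w ≠ 0) (hw : ∑ j, w j = 0) (ht : ∀ l, t + ∑ j, w j * dist (x j) (x l) ^ 2 = 0) :
    ∃ c : ℝ, c ≠ 0 ∧ ∀ i j,
      eval (fun p : PairIdx n => ((dist (x p.1.1) (x p.1.2) : ℝ) : ℂ)) (dF i j)
        = ((c * dist (x i) (x j) * w i * w j : ℝ) : ℂ) := by
  have hv0 : (Fin.cons t w : Fin (n + 1) → ℝ) ≠ 0 := fun h =>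
    hw0 (funext fun j => congrFun h j.succ)
  obtain ⟨c, hc, hadj⟩ := exists_adjugate_cayleyMengerMatrix_eq hx hv0
    (cayleyMengerMatrix_mulVec_cons_eq_zero_iff.mpr ⟨hw, ht⟩)
  refine ⟨4 * c, mul_ne_zero four_ne_zero hc, fun i j => ?_⟩
  rw [eval_dF, hadj]
  simp only [Matrix.smul_apply, vecMulVec_apply, Fin.cons_succ, smul_eq_mul]
  congr 1
  ring

end PartialDerivatives

/-! ### Nonvanishing -/

theorem exists_forall_eq_mul_ofReal {ι : Type*} {z : ι → ℂ}
    (hz : (∀ i, (z i).im = 0) ∨ ∀ i, (z i).re = 0) :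
    ∃ (ε : ℂ) (y : ι → ℝ), ∀ i, z i = ε * y i := by
  rcases hz with h | h
  · exact ⟨1, fun i => (z i).re, fun i => by apply Complex.ext <;> simp [h]⟩
  · exact ⟨Complex.I, fun i => (z i).im, fun i => by apply Complex.ext <;> simp [h]⟩

theorem finrank_vectorSpan_range_eq_confDim {d n : ℕ} (x : Fin n → EuclideanSpace ℝ (Fin d)) :
    Module.finrank ℝ (vectorSpan ℝ (Set.range x)) = confDim x := by
  rw [confDim, direction_affineSpan]

theorem exists_ne_and_ne_zero_of_sum_eq_zero {ι M : Type*} [Fintype ι] [AddCommMonoid M]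
    {f : ι → M} (hf : ∑ j, f j = 0) {i : ι} (hi : f i ≠ 0) : ∃ k, k ≠ i ∧ f k ≠ 0 := by
  by_contra! h
  exact hi (by rw [← hf, Finset.sum_eq_single i (fun k _ hk => h k hk) (by simp)])

theorem exists_real_add_sum_mul_dist_sq_eq_zero {P ι : Type*} [PseudoMetricSpace P] [Fintype ι]
    {x : ι → P} {Δ ε : ℂ} (hε : ε ≠ 0) {w : ι → ℝ}
    (h : ∀ l, Δ + ∑ j, ε * w j * (dist (x j) (x l) : ℂ) ^ 2 = 0) :
    ∃ t : ℝ, ∀ l, t + ∑ j, w j * dist (x j) (x l) ^ 2 = 0 := by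
  refine ⟨(Δ / ε).re, fun l => ?_⟩
  have hdiv : Δ / ε + ((∑ j, w j * dist (x j) (x l) ^ 2 : ℝ) : ℂ) = 0 := by
    refine (mul_eq_zero.mp (Eq.trans ?_ (h l))).resolve_left hε
    push_cast
    simp only [mul_add, mul_div_cancel₀ _ hε, Finset.mul_sum, mul_assoc]
  simpa only [Complex.add_re, Complex.ofReal_re, Complex.zero_re] using congrArg Complex.re hdiv

theorem sum_dist_zpow_mul_sq_pos {P ι : Type*} [MetricSpace P] [Fintype ι] [DecidableEq ι]
    {x : ι → P} (hx : Function.Injective x) {m : ι → ℝ} (hm : ∀ j, 0 < m j) {y : ι → ℝ}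
    (s : ℤ) {i k : ι} (hki : k ≠ i) (hk : y k ≠ 0) :
    0 < ∑ j ∈ Finset.univ \ {i}, dist (x i) (x j) ^ s * dist (x i) (x j) * m j * y j ^ 2 := by
  refine Finset.sum_pos' (fun j _ => ?_) ⟨k, by simpa using hki, ?_⟩
  · have := hm j
    positivity
  · have := hm k
    have : 0 < dist (x i) (x k) := dist_pos.mpr (hx.ne hki.symm)
    positivity

theorem statement10_general {V P : Type*} [NormedAddCommGroup V] [InnerProductSpace ℝ V]
    [MetricSpace P] [NormedAddTorsor V P] {n : ℕ} (c2 : ℤ)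
    (x : Fin n → P) (hinj : Function.Injective x)
    (hdim : Module.finrank ℝ (vectorSpan ℝ (Set.range x)) + 2 = n)
    (m : Fin n → ℝ) (hm : ∀ i, 0 < m i) (z : Fin n → ℂ) (Δ0 : ℂ)
    (hz : ∃ (ε : ℂ) (y : Fin n → ℝ), ∀ j, z j = ε * y j)
    (hker0 : ∑ j, (m j : ℂ) * z j = 0)
    (hkerl : ∀ l : Fin n, Δ0 + ∑ j, (m j : ℂ) * z j * (dist (x j) (x l) : ℂ) ^ 2 = 0)
    (i : Fin n) (hi : z i ≠ 0) :
    ∑ j ∈ Finset.univ \ {i},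
        (dist (x i) (x j) : ℂ) ^ (1 - c2) *
          MvPolynomial.eval (fun p : PairIdx n => ((dist (x p.1.1) (x p.1.2) : ℝ) : ℂ))
            (dF i j) * z j ≠ 0 := by
  obtain ⟨ε, y, hy⟩ := hz
  obtain ⟨hε, hyi⟩ : ε ≠ 0 ∧ y i ≠ 0 := by simpa [hy] using hi
  have hmz (j : Fin n) : (m j : ℂ) * z j = ε * ((m j * y j : ℝ) : ℂ) := by
    rw [hy]
    push_cast
    ring
  simp only [hmz] at hker0 hkerl
  have hw : ∑ j, m j * y j = 0 := by
    rw [← Finset.mul_sum, ← Complex.ofReal_sum] at hker0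
    exact Complex.ofReal_eq_zero.mp ((mul_eq_zero.mp hker0).resolve_left hε)
  obtain ⟨t, ht⟩ := exists_real_add_sum_mul_dist_sq_eq_zero hε hkerl
  have hwi : m i * y i ≠ 0 := mul_ne_zero (hm i).ne' hyi
  obtain ⟨k, hki, hwk⟩ := exists_ne_and_ne_zero_of_sum_eq_zero hw hwi
  obtain ⟨c, hc, hdF⟩ := exists_eval_dF_eq hdim (Function.ne_iff.mpr ⟨i, hwi⟩) hw ht
  have hpos := sum_dist_zpow_mul_sq_pos hinj hm (1 - c2) hki (right_ne_zero_of_mul hwk)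
  -- The sum is `ε * c * (m i * y i)` times the positive real sum of `hpos`.
  refine ne_of_eq_of_ne ?_ (mul_ne_zero hε (Complex.ofReal_ne_zero.mpr
    (mul_ne_zero (mul_ne_zero hc hwi) hpos.ne')))
  push_cast
  simp only [Finset.mul_sum]
  refine Finset.sum_congr rfl fun j _ => ?_
  rw [hdF, hy]
  push_cast
  ring

/-- In the setting of the correspondence (positive masses, `λ = M`,
`z`'s all real or all purely imaginary with at least two nonzero, satisfying the
defining equations), there exists an index `i` such that
`∑_{j≠i} r_{ij}^{−2a+1} (∂F/∂R_{ij})(r) z_j ≠ 0`. -/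
theorem statement10 {n : ℕ} (hn : 3 ≤ n) (c2 : ℤ) (hc2 : c2 ≠ 0)
    (x : Fin n → EuclideanSpace ℝ (Fin (n - 2))) (hinj : Function.Injective x)
    (m : Fin n → ℝ) (hm : ∀ i, 0 < m i)
    (hcc : IsCentralConfig c2 m (∑ i, m i) x) (hdim : confDim x = n - 2)
    (z : Fin n → ℂ) (Δ0 : ℂ)
    (hzri : ((∀ i, (z i).im = 0) ∧ Δ0.im = 0) ∨ ((∀ i, (z i).re = 0) ∧ Δ0.re = 0))
    (hz2 : ∃ i j : Fin n, i ≠ j ∧ z i ≠ 0 ∧ z j ≠ 0)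
    (hz : ∀ i j : Fin n, i < j → (dist (x i) (x j) : ℂ) ^ c2 - 1 - z i * z j = 0)
    (hker0 : ∑ j, (m j : ℂ) * z j = 0)
    (hkerl : ∀ l : Fin n, Δ0 + ∑ j, (m j : ℂ) * z j * (dist (x j) (x l) : ℂ) ^ 2 = 0) :
    ∃ i : Fin n,
      ∑ j ∈ Finset.univ \ {i},
          (dist (x i) (x j) : ℂ) ^ (1 - c2) *
            MvPolynomial.eval (fun p : PairIdx n => ((dist (x p.1.1) (x p.1.2) : ℝ) : ℂ))
              (dF i j) * z j ≠ 0 := by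
  obtain ⟨i, _, _, hi, _⟩ := hz2
  exact ⟨i, statement10_general c2 x hinj (by rw [finrank_vectorSpan_range_eq_confDim]; omega) m hm
    z Δ0 (exists_forall_eq_mul_ofReal (hzri.imp And.left And.left)) hker0 hkerl i hi⟩
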